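/- arXiv:1410.0142 — 3 statements merged into one kernel-verified Lean document; each statement's English description precedes it below -/
import Mathlib

section
/- Let r,s,t,u be integers with ru−st=±1 and s even. Then there is a (unique) group homomorphism φ₄ : G(r,s,t,u) → ℤ/2ℤ sending the generators a ↦ 1, b ↦ 1, c ↦ 0, and its kernel is isomorphic, as an abstract group, to G(r, s/2, 2t, u). -/
/-- The relators of the presentation of the fundamental group of the sapphire
Sol 3-manifold determined by the matrix `[[r, s], [t, u]]`:
`a·b·a⁻¹·b`, `c²·a^(−2r)·b^(−s)` and `c·a^(2t)·b^u·c⁻¹·a^(2t)·b^u`,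
where `a, b, c` are the generators `of 0, of 1, of 2`. -/
def sapphireRels (r s t u : ℤ) : Set (FreeGroup (Fin 3)) :=
  { FreeGroup.of 0 * FreeGroup.of 1 * (FreeGroup.of 0)⁻¹ * FreeGroup.of 1,
    FreeGroup.of 2 ^ (2 : ℤ) * FreeGroup.of 0 ^ (-(2 * r)) * FreeGroup.of 1 ^ (-s),
    FreeGroup.of 2 * FreeGroup.of 0 ^ (2 * t) * FreeGroup.of 1 ^ u * (FreeGroup.of 2)⁻¹ *
      FreeGroup.of 0 ^ (2 * t) * FreeGroup.of 1 ^ u }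

/-- The fundamental group `G(r,s,t,u)` of the sapphire Sol 3-manifold. -/
abbrev SapphireGroup (r s t u : ℤ) := PresentedGroup (sapphireRels r s t u)

/-- The three relations hold between the generators of the sapphire group. -/
lemma sapphire_rels (r s t u : ℤ) :
    let a : SapphireGroup r s t u := PresentedGroup.of 0
    let b : SapphireGroup r s t u := PresentedGroup.of 1
    let c : SapphireGroup r s t u := PresentedGroup.of 2
    a * b * a⁻¹ * b = 1 ∧ c ^ (2 : ℤ) * a ^ (-(2 * r)) * b ^ (-s) = 1 ∧
      c * a ^ (2 * t) * b ^ u * c⁻¹ * a ^ (2 * t) * b ^ u = 1 := by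
  refine ⟨?_, ?_, ?_⟩
  · exact PresentedGroup.one_of_mem (rels := sapphireRels r s t u) (by left; rfl)
  · exact PresentedGroup.one_of_mem (rels := sapphireRels r s t u) (by right; left; rfl)
  · exact PresentedGroup.one_of_mem (rels := sapphireRels r s t u) (by right; right; rfl)

/-- Three elements satisfying the relations define a homomorphism. -/
lemma sapphire_lift {G : Type*} [Group G] (r s t u : ℤ) (a b c : G)
    (h1 : a * b * a⁻¹ * b = 1) (h2 : c ^ (2 : ℤ) * a ^ (-(2 * r)) * b ^ (-s) = 1)
    (h3 : c * a ^ (2 * t) * b ^ u * c⁻¹ * a ^ (2 * t) * b ^ u = 1) :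
    ∃ f : SapphireGroup r s t u →* G, f (PresentedGroup.of 0) = a ∧
      f (PresentedGroup.of 1) = b ∧ f (PresentedGroup.of 2) = c := by
  have H : ∀ x ∈ sapphireRels r s t u, FreeGroup.lift ![a, b, c] x = 1 := by
    rintro x (rfl | rfl | rfl)
    · simpa using h1
    · simpa using h2
    · simpa using h3
  refine ⟨PresentedGroup.toGroup H, ?_, ?_, ?_⟩ <;> simp

lemma sapphire_ext {G : Type*} [Group G] {r s t u : ℤ} (f g : SapphireGroup r s t u →* G)
    (h0 : f (PresentedGroup.of 0) = g (PresentedGroup.of 0))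
    (h1 : f (PresentedGroup.of 1) = g (PresentedGroup.of 1))
    (h2 : f (PresentedGroup.of 2) = g (PresentedGroup.of 2)) : f = g := by
  apply PresentedGroup.ext
  intro x
  fin_cases x
  · exact h0
  · exact h1
  · exact h2

lemma klein_bab {G : Type*} [Group G] {a b : G} (h : a * b * a⁻¹ * b = 1) : b * a * b = a := by
  have h1 : b * (a * b * a⁻¹) = 1 := by
    rw [mul_eq_one_iff_eq_inv] at h ⊢
    rw [h, inv_inv]
  calc b * a * b = b * (a * b * a⁻¹) * a := by group
    _ = a := by rw [h1, one_mul]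

lemma klein_of_bab {G : Type*} [Group G] {a b : G} (h : b * a * b = a) : a * b * a⁻¹ * b = 1 := by
  have : a * b = b⁻¹ * a := by rw [eq_inv_mul_iff_mul_eq, ← mul_assoc, h]
  rw [this]; group

lemma klein_comm {G : Type*} [Group G] {a b : G} (h : b * a * b = a) : Commute (a ^ 2) b := by
  have h1 : a * b = b⁻¹ * a := by rw [eq_inv_mul_iff_mul_eq, ← mul_assoc, h]
  have h2 : a * b⁻¹ = b * a := by rw [mul_inv_eq_iff_eq_mul, h]
  show a ^ 2 * b = b * a ^ 2
  rw [pow_two, mul_assoc, h1, ← mul_assoc, h2, mul_assoc]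

lemma rel2_iff {G : Type*} [Group G] {a b c : G} (h : Commute (a ^ 2) b) (r s : ℤ) :
    c ^ (2 : ℤ) * a ^ (-(2 * r)) * b ^ (-s) = 1 ↔ c ^ 2 = (a ^ 2) ^ r * b ^ s := by
  have e : a ^ (2 * r) = (a ^ 2) ^ r := by rw [zpow_mul]; norm_cast
  rw [zpow_neg, zpow_neg, e, ((h.zpow_zpow r s)).eq, mul_assoc, ← mul_inv_rev,
    mul_inv_eq_one]
  norm_cast

lemma rel3_iff {G : Type*} [Group G] {a b c : G} (t u : ℤ) :
    c * a ^ (2 * t) * b ^ u * c⁻¹ * a ^ (2 * t) * b ^ u = 1 ↔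
      ((a ^ 2) ^ t * b ^ u) * c * ((a ^ 2) ^ t * b ^ u) = c := by
  have e : a ^ (2 * t) = (a ^ 2) ^ t := by rw [zpow_mul]; norm_cast
  rw [e]
  have e2 : c * (a ^ 2) ^ t * b ^ u * c⁻¹ * (a ^ 2) ^ t * b ^ u =
    c * ((a ^ 2) ^ t * b ^ u) * c⁻¹ * ((a ^ 2) ^ t * b ^ u) := by simp only [mul_assoc]
  rw [e2]
  exact ⟨fun h => klein_bab h, fun h => klein_of_bab h⟩

/-- Left translation on both sheets of `K × Bool`. -/
def sheetL (K : Type*) [Group K] : K →* Equiv.Perm (K × Bool) where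
  toFun g := ⟨fun p => (g * p.1, p.2), fun p => (g⁻¹ * p.1, p.2),
    fun p => by simp, fun p => by simp⟩
  map_one' := by ext p <;> simp
  map_mul' g h := by ext p <;> simp [mul_assoc]

/-- The permutation of `K × Bool` by which the generator `a` acts. -/
def sheetA {K : Type*} [Group K] (A : K) : Equiv.Perm (K × Bool) :=
  ⟨fun p => (A * p.1, !p.2), fun p => (A⁻¹ * p.1, !p.2), fun p => by simp, fun p => by simp⟩

/-- The permutation of `K × Bool` by which the generator `b` acts. -/
def sheetB {K : Type*} [Group K] (B : K) : Equiv.Perm (K × Bool) :=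
  ⟨fun p => (bif p.2 then B * p.1 else p.1, !p.2),
   fun p => (bif p.2 then p.1 else B⁻¹ * p.1, !p.2),
   by rintro ⟨x, _ | _⟩ <;> simp, by rintro ⟨x, _ | _⟩ <;> simp⟩

/-- The permutation of `K × Bool` by which the generator `c` acts. -/
def sheetC {K : Type*} [Group K] (C C' : K) : Equiv.Perm (K × Bool) :=
  ⟨fun p => ((bif p.2 then C' else C) * p.1, p.2),
   fun p => ((bif p.2 then C' else C)⁻¹ * p.1, p.2),
   by rintro ⟨x, _ | _⟩ <;> simp, by rintro ⟨x, _ | _⟩ <;> simp⟩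

@[simp] lemma sheetL_apply {K : Type*} [Group K] (g x : K) (i : Bool) :
    sheetL K g (x, i) = (g * x, i) := rfl
@[simp] lemma sheetA_apply {K : Type*} [Group K] (g x : K) (i : Bool) :
    sheetA g (x, i) = (g * x, !i) := rfl
@[simp] lemma sheetB_false {K : Type*} [Group K] (g x : K) :
    sheetB g (x, false) = (x, true) := rfl
@[simp] lemma sheetB_true {K : Type*} [Group K] (g x : K) :
    sheetB g (x, true) = (g * x, false) := rfl
@[simp] lemma sheetC_false {K : Type*} [Group K] (g g' x : K) :
    sheetC g g' (x, false) = (g * x, false) := rfl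
@[simp] lemma sheetC_true {K : Type*} [Group K] (g g' x : K) :
    sheetC g g' (x, true) = (g' * x, true) := rfl

/-- The permutations satisfy the relations of `G(r,2k,t,2m+1)`. -/
lemma sheet_rels {K : Type*} [Group K] (r k t m : ℤ) (A B C : K)
    (h1 : B * A * B = A) (h2 : C ^ 2 = (A ^ 2) ^ r * B ^ k)
    (h3 : ((A ^ 2) ^ (2 * t) * B ^ (2 * m + 1)) * C * ((A ^ 2) ^ (2 * t) * B ^ (2 * m + 1)) = C) :
    let y := (A ^ 2) ^ t * B ^ m
    let a := sheetA A
    let b := sheetB B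
    let c := sheetC C (y * C * y * B)
    b * a * b = a ∧ c ^ 2 = (a ^ 2) ^ r * b ^ (2 * k) ∧
    ((a ^ 2) ^ t * b ^ (2 * m + 1)) * c * ((a ^ 2) ^ t * b ^ (2 * m + 1)) = c := by
  intro y a b c
  have hAB := klein_comm h1
  have hyB : Commute y B := (hAB.zpow_left t).mul_left ((Commute.refl B).zpow_left m)
  have hD : (A ^ 2) ^ (2 * t) * B ^ (2 * m + 1) = y * y * B := by
    have := (hAB.zpow_zpow t m).eq
    calc _ = (A ^ 2) ^ t * ((A ^ 2) ^ t * B ^ m) * B ^ m * B := by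
          rw [two_mul, two_mul, zpow_add, zpow_add, zpow_add, zpow_one]; simp only [mul_assoc]
      _ = _ := by rw [this]; simp only [y, mul_assoc]
  rw [hD] at h3
  have hyC2 : Commute y (C ^ 2) := by
    rw [h2]
    refine Commute.mul_left (Commute.mul_right ?_ ?_) (Commute.mul_right ?_ ?_)
    · exact ((Commute.refl (A ^ 2)).zpow_left t).zpow_right r
    · exact hAB.zpow_zpow t k
    · exact (hAB.symm).zpow_zpow m r
    · exact ((Commute.refl B).zpow_left m).zpow_right k
  have ha2 : a ^ 2 = sheetL K (A ^ 2) := by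
    apply Equiv.ext
    rintro ⟨x, i⟩
    simp [a, pow_two, mul_assoc]
  have hb2 : b ^ (2 : ℤ) = sheetL K B := by
    apply Equiv.ext
    rintro ⟨x, _ | _⟩ <;> simp [b, zpow_ofNat, pow_two]
  have hd : (a ^ 2) ^ t * b ^ (2 * m + 1) = sheetL K y * b := by
    rw [zpow_add, zpow_mul, hb2, ha2, zpow_one, ← map_zpow, ← map_zpow, ← mul_assoc, ← map_mul]
  refine ⟨?_, ?_, ?_⟩
  · apply Equiv.ext
    rintro ⟨x, _ | _⟩
    · simp [a, b]
    · simp only [a, b, Equiv.Perm.mul_apply, sheetB_true, sheetA_apply, Bool.not_false,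
        Bool.not_true, ← mul_assoc, h1]
  · rw [zpow_mul, hb2, ha2, ← map_zpow, ← map_zpow, ← map_mul, ← h2]
    apply Equiv.ext
    rintro ⟨x, _ | _⟩
    · simp [c, pow_two, mul_assoc]
    · have key : (y * C * y * B) * (y * C * y * B) = C ^ 2 := by
        calc (y * C * y * B) * (y * C * y * B)
            = y * C * (y * (B * y)) * C * (y * B) := by simp only [mul_assoc]
          _ = y * C * (y * y * B * C * (y * y * B)) * (y * y * B)⁻¹ * (y * B) := by
              rw [hyB.symm.eq]; group
          _ = y * (C ^ 2) * (y * y * B)⁻¹ * (y * B) := by rw [h3]; simp only [pow_two, mul_assoc]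
          _ = C ^ 2 * y * (y * y * B)⁻¹ * (y * B) := by rw [hyC2.eq]
          _ = C ^ 2 * (y * B⁻¹ * y⁻¹ * B) := by group
          _ = C ^ 2 := by rw [hyB.inv_right.eq]; group
      simp only [c, pow_two, Equiv.Perm.mul_apply, sheetC_true, sheetL_apply, ← mul_assoc] at key ⊢
      rw [key]
  · rw [hd]
    apply Equiv.ext
    rintro ⟨x, _ | _⟩
    · have key : y * (B * (y * C * y * B * (y * x))) = C * x  := by
        calc y * (B * (y * C * y * B * (y * x)))
            = y * (B * y) * C * (y * (B * y)) * x := by simp only [mul_assoc]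
          _ = (y * y * B) * C * (y * y * B) * x := by rw [hyB.symm.eq]; simp only [mul_assoc]
          _ = _ := by rw [h3]
      simp only [Equiv.Perm.mul_apply, b, c, sheetC_true, sheetC_false, sheetL_apply, sheetB_true,
        sheetB_false, key]
    · simp only [Equiv.Perm.mul_apply, b, c, sheetC_true, sheetC_false, sheetL_apply, sheetB_true,
        sheetB_false, mul_assoc]

/-- The elements `ab`, `b²`, `c` satisfy the relations of `G(r,k,2t,2m+1)`. -/
lemma sub_rels {G : Type*} [Group G] (r k t m : ℤ) (a b c : G)
    (h1 : b * a * b = a) (h2 : c ^ 2 = (a ^ 2) ^ r * b ^ (2 * k))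
    (h3 : ((a ^ 2) ^ t * b ^ (2 * m + 1)) * c * ((a ^ 2) ^ t * b ^ (2 * m + 1)) = c) :
    (a * b) ^ 2 = a ^ 2 ∧ b ^ 2 * (a * b) * b ^ 2 = a * b ∧
    c ^ 2 = ((a * b) ^ 2) ^ r * (b ^ 2) ^ k ∧
    (((a * b) ^ 2) ^ (2 * t) * (b ^ 2) ^ (2 * m + 1)) * c *
      (((a * b) ^ 2) ^ (2 * t) * (b ^ 2) ^ (2 * m + 1)) = c := by
  have hA : (a * b) ^ 2 = a ^ 2 := by
    calc (a * b) ^ 2 = a * (b * a * b) := by simp only [pow_two, mul_assoc]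
      _ = _ := by rw [h1, pow_two]
  have hab := klein_comm h1
  have hb (n : ℤ) : (b ^ 2) ^ n = b ^ (2 * n) := by rw [zpow_mul]; norm_cast
  refine ⟨hA, ?_, ?_, ?_⟩
  · calc b ^ 2 * (a * b) * b ^ 2 = b * (b * a * b) * b * b := by simp only [pow_two, mul_assoc]
      _ = _ := by rw [h1, h1]
  · rw [hA, hb, h2]
  · have hd : ((a * b) ^ 2) ^ (2 * t) * (b ^ 2) ^ (2 * m + 1) =
        ((a ^ 2) ^ t * b ^ (2 * m + 1)) * ((a ^ 2) ^ t * b ^ (2 * m + 1)) := by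
      have := (hab.zpow_zpow t (2 * m + 1)).eq
      rw [hA, hb, two_mul t, two_mul (2 * m + 1), zpow_add, zpow_add]
      calc _ = (a ^ 2) ^ t * ((a ^ 2) ^ t * b ^ (2 * m + 1)) * b ^ (2 * m + 1) := by
            simp only [mul_assoc]
        _ = _ := by conv_lhs => rw [this]
                    simp only [mul_assoc]
    rw [hd]
    set d := (a ^ 2) ^ t * b ^ (2 * m + 1)
    calc d * d * c * (d * d) = d * (d * c * d) * d := by simp only [mul_assoc]
      _ = c := by rw [h3, h3]

/-- The comparison map `K × Bool → G`. -/
def sheetF {K G : Type*} [Group K] [Group G] (f : K →* G) (b : G) (p : K × Bool) : G :=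
  bif p.2 then b * f p.1 else f p.1

lemma sapphire_kernel (r k t m : ℤ)
    (φ : SapphireGroup r (2 * k) t (2 * m + 1) →* Multiplicative (ZMod 2))
    (p0 : φ (PresentedGroup.of 0) = Multiplicative.ofAdd (1 : ZMod 2))
    (p1 : φ (PresentedGroup.of 1) = Multiplicative.ofAdd (1 : ZMod 2))
    (p2 : φ (PresentedGroup.of 2) = Multiplicative.ofAdd (0 : ZMod 2)) :
    Nonempty (φ.ker ≃* SapphireGroup r k (2 * t) (2 * m + 1)) := by
  obtain ⟨g1, g2, g3⟩ := sapphire_rels r (2 * k) t (2 * m + 1)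
  obtain ⟨k1, k2, k3⟩ := sapphire_rels r k (2 * t) (2 * m + 1)
  set a : SapphireGroup r (2 * k) t (2 * m + 1) := PresentedGroup.of 0 with ha
  set b : SapphireGroup r (2 * k) t (2 * m + 1) := PresentedGroup.of 1 with hb
  set c : SapphireGroup r (2 * k) t (2 * m + 1) := PresentedGroup.of 2 with hc
  set A : SapphireGroup r k (2 * t) (2 * m + 1) := PresentedGroup.of 0 with hA
  set B : SapphireGroup r k (2 * t) (2 * m + 1) := PresentedGroup.of 1 with hB
  set C : SapphireGroup r k (2 * t) (2 * m + 1) := PresentedGroup.of 2 with hC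
  replace g1 := klein_bab g1
  replace k1 := klein_bab k1
  rw [rel2_iff (klein_comm g1)] at g2
  rw [rel2_iff (klein_comm k1)] at k2
  rw [rel3_iff] at g3 k3
  obtain ⟨q0, q1, q2, q3⟩ := sub_rels r k t m a b c g1 g2 g3
  obtain ⟨s1, s2, s3⟩ := sheet_rels r k t m A B C k1 k2 k3
  obtain ⟨f, fA, fB, fC⟩ := sapphire_lift r k (2 * t) (2 * m + 1) (a * b) (b ^ 2) c
    (klein_of_bab q1) ((rel2_iff (klein_comm q1) _ _).2 q2) ((rel3_iff _ _).2 q3)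
  obtain ⟨ρ, ρa, ρb, ρc⟩ := sapphire_lift r (2 * k) t (2 * m + 1) _ _ _
    (klein_of_bab s1) ((rel2_iff (klein_comm s1) _ _).2 s2) ((rel3_iff _ _).2 s3)
  rw [← hA] at fA
  rw [← hB] at fB
  rw [← hC] at fC
  rw [← ha] at ρa
  rw [← hb] at ρb
  rw [← hc] at ρc
  -- injectivity
  have hinj1 : ∀ g x, ρ (f g) (x, false) = (g * x, false) := by
    intro g
    induction g using PresentedGroup.induction_on with | _ w
    induction w using FreeGroup.induction_on with
    | C1 => intro x; simp
    | of i =>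
      intro x
      fin_cases i
      · show ρ (f A) (x, false) = (A * x, false)
        simp [fA, ρa, ρb]
      · show ρ (f B) (x, false) = (B * x, false)
        simp [fB, ρb, pow_two]
      · show ρ (f C) (x, false) = (C * x, false)
        simp [fC, ρc]
    | inv_of i hi =>
      intro x
      rw [map_inv, map_inv, map_inv, Equiv.Perm.inv_eq_iff_eq, hi]
      simp
    | mul v w hv hw =>
      intro x
      rw [map_mul, map_mul, map_mul, Equiv.Perm.mul_apply, hw, hv, mul_assoc]
  have hinj : Function.Injective f := by
    intro g h e
    have := hinj1 g 1
    rw [e, hinj1 h 1] at this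
    simpa using this.symm
  -- surjectivity
  have hequi : ∀ g p, sheetF f b (ρ g p) = g * sheetF f b p := by
    intro g
    induction g using PresentedGroup.induction_on with | _ w
    induction w using FreeGroup.induction_on with
    | C1 => intro x; simp
    | of i =>
      fin_cases i
      · show ∀ p, sheetF f b (ρ a p) = a * sheetF f b p
        rintro ⟨x, _ | _⟩
        · simp only [ρa, sheetA_apply, sheetF, Bool.not_false, cond_true, cond_false, map_mul, fA]
          conv_rhs => rw [← g1]
          simp only [mul_assoc]
        · simp only [ρa, sheetA_apply, sheetF, Bool.not_true, cond_true, cond_false, map_mul, fA,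
            mul_assoc]
      · show ∀ p, sheetF f b (ρ b p) = b * sheetF f b p
        rintro ⟨x, _ | _⟩
        · simp [ρb, sheetF]
        · simp [ρb, sheetF, fB, pow_two, mul_assoc]
      · show ∀ p, sheetF f b (ρ c p) = c * sheetF f b p
        rintro ⟨x, _ | _⟩
        · simp [ρc, sheetF, fC]
        · have hb2 : (b ^ 2) ^ m = b ^ (2 * m) := by rw [zpow_mul]; norm_cast
          have hd : (a ^ 2) ^ t * b ^ (2 * m + 1) = (a ^ 2) ^ t * b ^ (2 * m) * b := by
            rw [zpow_add, zpow_one, mul_assoc]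
          have hbc : Commute b ((a ^ 2) ^ t * b ^ (2 * m)) :=
            Commute.mul_right ((klein_comm g1).symm.zpow_right t) (Commute.self_zpow b _)
          simp only [ρc, sheetF, sheetC_true, cond_true, map_mul, map_zpow, map_pow, fA, fB, fC,
            q0, hb2]
          rw [hd] at g3
          set y := (a ^ 2) ^ t * b ^ (2 * m)
          calc b * (y * c * y * b ^ 2 * f x) = (b * y) * c * (y * b) * b * f x := by
                simp only [pow_two, mul_assoc]
            _ = c * (b * f x) := by rw [hbc.eq, g3, mul_assoc]
    | inv_of i hi =>
      intro x
      rw [eq_comm, map_inv, map_inv, inv_mul_eq_iff_eq_mul, ← hi, ← map_inv]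
      simp
    | mul v w hv hw =>
      intro x
      rw [map_mul, map_mul, Equiv.Perm.mul_apply, hv, hw, mul_assoc]
  have hfker : ∀ x, φ (f x) = 1 := by
    have : φ.comp f = 1 := by
      apply sapphire_ext
      · show φ (f A) = 1
        rw [fA, map_mul, p0, p1]; decide
      · show φ (f B) = 1
        rw [fB, map_pow, p1]; decide
      · show φ (f C) = 1
        rw [fC, p2]; decide
    intro x
    exact DFunLike.congr_fun this x
  have hrange : f.range = φ.ker := by
    apply le_antisymm
    · rintro _ ⟨x, rfl⟩
      exact hfker x
    · intro g hg
      have e := hequi g (1, false)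
      have e1 : sheetF f b (1, false) = 1 := by simp [sheetF]
      rw [e1, mul_one] at e
      rcases hp : ρ g (1, false) with ⟨x, _ | _⟩
      · rw [hp] at e
        exact ⟨x, e⟩
      · rw [hp] at e
        exfalso
        have e2 : b * f x = g := e
        rw [MonoidHom.mem_ker, ← e2, map_mul, hfker, p1] at hg
        revert hg; decide
  exact ⟨((MonoidHom.ofInjective hinj).trans (MulEquiv.subgroupCongr hrange)).symm⟩

theorem stmt3 (r s t u : ℤ) (h : r * u - s * t = 1 ∨ r * u - s * t = -1) (hs : Even s) :
    (∃! φ : SapphireGroup r s t u →* Multiplicative (ZMod 2),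
      φ (PresentedGroup.of 0) = Multiplicative.ofAdd (1 : ZMod 2) ∧
      φ (PresentedGroup.of 1) = Multiplicative.ofAdd (1 : ZMod 2) ∧
      φ (PresentedGroup.of 2) = Multiplicative.ofAdd (0 : ZMod 2)) ∧
    ∀ φ : SapphireGroup r s t u →* Multiplicative (ZMod 2),
      φ (PresentedGroup.of 0) = Multiplicative.ofAdd (1 : ZMod 2) →
      φ (PresentedGroup.of 1) = Multiplicative.ofAdd (1 : ZMod 2) →
      φ (PresentedGroup.of 2) = Multiplicative.ofAdd (0 : ZMod 2) →
      Nonempty (φ.ker ≃* SapphireGroup r (s / 2) (2 * t) u) := by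
  obtain ⟨k, rfl⟩ : ∃ k, s = 2 * k := by
    obtain ⟨k, hk⟩ := hs
    exact ⟨k, by omega⟩
  have hu : Odd u := by
    by_contra hu
    rw [Int.not_odd_iff_even] at hu
    obtain ⟨m, rfl⟩ := hu
    have e : r * (m + m) - 2 * k * t = 2 * (r * m - k * t) := by ring
    rw [e] at h
    omega
  obtain ⟨m, rfl⟩ := hu
  refine ⟨?_, ?_⟩
  · have hb : (Multiplicative.ofAdd (1 : ZMod 2)) ^ 2 = 1 := by decide
    have hc : (Multiplicative.ofAdd (0 : ZMod 2)) = 1 := rfl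
    have hb' (n : ℤ) : (Multiplicative.ofAdd (1 : ZMod 2)) ^ (2 * n) = 1 := by
      rw [zpow_mul, zpow_ofNat, hb, one_zpow]
    obtain ⟨f, f0, f1, f2⟩ := sapphire_lift r (2 * k) t (2 * m + 1)
      (Multiplicative.ofAdd (1 : ZMod 2)) (Multiplicative.ofAdd (1 : ZMod 2))
      (Multiplicative.ofAdd (0 : ZMod 2)) (by decide)
      (by rw [zpow_neg, zpow_neg, hb', hb', hc]; simp)
      (by rw [zpow_add, hb', hb', hc]; decide)
    refine ⟨f, ⟨f0, f1, f2⟩, ?_⟩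
    rintro g ⟨g0, g1, g2⟩
    exact sapphire_ext g f (by rw [g0, f0]) (by rw [g1, f1]) (by rw [g2, f2])
  · intro φ p0 p1 p2
    have e : 2 * k / 2 = k := by omega
    rw [e]
    exact sapphire_kernel r k t m φ p0 p1 p2
end

section
/- Let r,s,t,u be integers with ru−st=±1 and s even. Then there is a (unique) group homomorphism φ₆ : G(r,s,t,u) → ℤ/2ℤ sending the generators a ↦ 0, b ↦ 1, c ↦ 1, and its kernel is isomorphic, as an abstract group, to G(r, s/2, 2t, u). -/
namespace Sapphire

section Perm
variable {H : Type*} [Group H]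

/-- Diagonal permutation of `H ⊕ H`. -/
def pA (α β : H) : Equiv.Perm (H ⊕ H) :=
  Equiv.sumCongr (Equiv.mulLeft α) (Equiv.mulLeft β)

/-- Antidiagonal permutation of `H ⊕ H`. -/
def pD (α β : H) : Equiv.Perm (H ⊕ H) :=
  (pA α β).trans (Equiv.sumComm H H)

@[simp] lemma pA_inl (α β g : H) : pA α β (Sum.inl g) = Sum.inl (α * g) := rfl
@[simp] lemma pA_inr (α β g : H) : pA α β (Sum.inr g) = Sum.inr (β * g) := rfl
@[simp] lemma pD_inl (α β g : H) : pD α β (Sum.inl g) = Sum.inr (α * g) := rfl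
@[simp] lemma pD_inr (α β g : H) : pD α β (Sum.inr g) = Sum.inl (β * g) := rfl

lemma pA_one : pA (1 : H) 1 = 1 := by
  ext x; rcases x with x | x <;> simp
lemma pAA (α β α' β' : H) : pA α β * pA α' β' = pA (α * α') (β * β') := by
  ext x; rcases x with x | x <;> simp [mul_assoc]
lemma pAD (α β α' β' : H) : pA α β * pD α' β' = pD (β * α') (α * β') := by
  ext x; rcases x with x | x <;> simp [mul_assoc]
lemma pDA (α β α' β' : H) : pD α β * pA α' β' = pD (α * α') (β * β') := by
  ext x; rcases x with x | x <;> simp [mul_assoc]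
lemma pDD (α β α' β' : H) : pD α β * pD α' β' = pA (β * α') (α * β') := by
  ext x; rcases x with x | x <;> simp [mul_assoc]

/-- `pA` as a homomorphism. -/
def pAhom : H × H →* Equiv.Perm (H ⊕ H) where
  toFun p := pA p.1 p.2
  map_one' := pA_one
  map_mul' _ _ := (pAA _ _ _ _).symm

lemma pA_zpow (α β : H) (n : ℤ) : pA α β ^ n = pA (α ^ n) (β ^ n) := by
  have := map_zpow (pAhom (H := H)) (α, β) n
  exact this.symm

lemma pB_even (b : H) (n : ℤ) : pD 1 b ^ (2 * n) = pA (b ^ n) (b ^ n) := by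
  rw [zpow_mul, zpow_two, pDD, pA_zpow]; simp

lemma pB_odd (b : H) (n : ℤ) : pD 1 b ^ (2 * n + 1) = pD (b ^ n) (b ^ (n + 1)) := by
  rw [zpow_add, pB_even, zpow_one, pAD, zpow_add_one, mul_one]

end Perm

section Rel
variable {H : Type*} [Group H]

lemma sq_comm {a b : H} (h1 : a * b * a⁻¹ * b = 1) : Commute (a ^ (2 : ℤ)) b := by
  have e : a * b = b⁻¹ * a := by
    have := eq_inv_of_mul_eq_one_left h1
    exact mul_inv_eq_iff_eq_mul.1 this
  have e' : a * b⁻¹ = b * a := by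
    have : b * (a * b) = a := by rw [e]; group
    calc a * b⁻¹ = (b * (a * b)) * b⁻¹ := by rw [this]
      _ = b * a := by group
  unfold Commute SemiconjBy
  rw [zpow_two, mul_assoc, e, ← mul_assoc, e', mul_assoc]

lemma even_comm {a b : H} (h1 : a * b * a⁻¹ * b = 1) (n m : ℤ) :
    Commute (a ^ (2 * n)) (b ^ m) := by
  rw [zpow_mul]
  exact ((sq_comm h1).zpow_left n).zpow_right m

lemma ab_even {a b : H} (h1 : a * b * a⁻¹ * b = 1) (n : ℤ) :
    (a * b) ^ (2 * n) = a ^ (2 * n) := by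
  have e : a * b = b⁻¹ * a := by
    have := eq_inv_of_mul_eq_one_left h1
    exact mul_inv_eq_iff_eq_mul.1 this
  rw [zpow_mul, zpow_mul]
  congr 1
  rw [zpow_two, zpow_two]
  nth_rw 2 [e]
  group

/-- The first relator holds for the permutations. -/
lemma perm1 {a b : H} (h1 : a * b * a⁻¹ * b = 1) :
    pA a (a * b) * pD 1 b * (pA a (a * b))⁻¹ * pD 1 b = 1 := by
  have e : a * b = b⁻¹ * a := by
    have := eq_inv_of_mul_eq_one_left h1
    exact mul_inv_eq_iff_eq_mul.1 this
  have hi : (pA a (a * b))⁻¹ = pA a⁻¹ (a * b)⁻¹ := by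
    have := pA_zpow a (a * b) (-1)
    simpa only [zpow_neg_one] using this
  rw [hi, pAD, pDA, pDD, ← pA_one]
  congr 1
  · group
  · simpa using h1

lemma perm2 {a b c : H} {r m t k : ℤ} (h1 : a * b * a⁻¹ * b = 1)
    (h2 : c ^ (2 : ℤ) * a ^ (-(2 * r)) * b ^ (-m) = 1) :
    pD (a ^ (2 * t) * b ^ k * c) (c * (a ^ (2 * t) * b ^ k)⁻¹) ^ (2 : ℤ)
      * pA a (a * b) ^ (-(2 * r)) * pD 1 b ^ (-(2 * m)) = 1 := by
  have hc : c ^ (2 : ℤ) = b ^ m * a ^ (2 * r) := by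
    have := eq_inv_of_mul_eq_one_left h2
    rw [mul_eq_one_iff_eq_inv] at h2
    have h3 := mul_inv_eq_iff_eq_mul.1 (show c ^ (2:ℤ) * (a ^ (2 * r))⁻¹ = b ^ m by
      rw [← zpow_neg, h2, ← zpow_neg, neg_neg])
    exact h3
  have hy : Commute (a ^ (2 * t) * b ^ k) (c ^ (2 : ℤ)) := by
    rw [hc]
    refine Commute.mul_left ?_ ?_
    · exact (even_comm h1 t m).mul_right (((Commute.refl a).zpow_zpow _ _))
    · exact ((Commute.refl b).zpow_zpow _ _).mul_right (even_comm h1 r k).symm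
  generalize a ^ (2 * t) * b ^ k = y at *
  have e1 : -(2 * r) = 2 * (-r) := by ring
  have e2 : -(2 * m) = 2 * (-m) := by ring
  rw [e1] at h2
  rw [e1, e2, zpow_two, pDD, pA_zpow, pB_even, ab_even h1, pAA, pAA, ← pA_one]
  have hz : y * c * (c * y⁻¹) = c ^ (2 : ℤ) := by
    rw [show y * c * (c * y⁻¹) = y * c ^ (2 : ℤ) * y⁻¹ by rw [zpow_two]; group, hy.eq]
    group
  congr 1
  · rw [show c * y⁻¹ * (y * c) = c ^ (2 : ℤ) by rw [zpow_two]; group]; exact h2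
  · rw [hz]; exact h2

lemma perm3 {a b c : H} {t k : ℤ} (h1 : a * b * a⁻¹ * b = 1)
    (h3 : c * a ^ (2 * (2 * t)) * b ^ (2 * k + 1) * c⁻¹ * a ^ (2 * (2 * t)) * b ^ (2 * k + 1) = 1) :
    pD (a ^ (2 * t) * b ^ k * c) (c * (a ^ (2 * t) * b ^ k)⁻¹)
      * pA a (a * b) ^ (2 * t) * pD 1 b ^ (2 * k + 1)
      * (pD (a ^ (2 * t) * b ^ k * c) (c * (a ^ (2 * t) * b ^ k)⁻¹))⁻¹
      * pA a (a * b) ^ (2 * t) * pD 1 b ^ (2 * k + 1) = 1 := by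
  have hX : pA a (a * b) ^ (2 * t) * pD 1 b ^ (2 * k + 1)
      = pD (a ^ (2 * t) * b ^ k) (a ^ (2 * t) * b ^ k * b) := by
    rw [pA_zpow, pB_odd, ab_even h1, pAD, zpow_add_one, mul_assoc]
  have hyb : Commute (a ^ (2 * t) * b ^ k) b := by
    refine Commute.mul_left ?_ ((Commute.refl b).zpow_left k)
    simpa using even_comm h1 t 1
  have hx : a ^ (2 * (2 * t)) * b ^ (2 * k + 1)
      = (a ^ (2 * t) * b ^ k) * b * (a ^ (2 * t) * b ^ k) := by
    rw [mul_assoc _ b, ← hyb.eq]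
    have := (even_comm h1 t k).eq
    rw [show a ^ (2 * t) * b ^ k * (a ^ (2 * t) * b ^ k * b)
      = a ^ (2 * t) * (b ^ k * a ^ (2 * t)) * (b ^ k * b) by group, ← this]
    rw [two_mul (2 * t), zpow_add, two_mul k, zpow_add_one, zpow_add]
    group
  have h3' : c * (a ^ (2 * (2 * t)) * b ^ (2 * k + 1)) * c⁻¹
      * (a ^ (2 * (2 * t)) * b ^ (2 * k + 1)) = 1 := by
    rw [← h3]; simp only [mul_assoc]
  rw [hx] at h3'
  rw [mul_assoc (_ * _ * _ * _), mul_assoc (pD _ _) _ (pD 1 b ^ (2 * k + 1)), hX]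
  generalize a ^ (2 * t) * b ^ k = y at *
  have key : pD y (y * b) * (pD (y * c) (c * y⁻¹) * pD y (y * b)) = pD (y * c) (c * y⁻¹) := by
    rw [pDD, pDA]
    congr 1
    · group
    · have hh : (y * b * y) * c * (y * b * y) = c := by
        have := eq_inv_of_mul_eq_one_left h3'
        rw [mul_inv_eq_iff_eq_mul] at this
        rw [mul_assoc, this]; group
      have : y * b * (y * c * (y * b)) = (y * b * y) * c * (y * b * y) * y⁻¹ := by
        group
      rw [this, hh]
  have k2 : pD (y * c) (c * y⁻¹) * pD y (y * b)
      = (pD y (y * b))⁻¹ * pD (y * c) (c * y⁻¹) := by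
    rw [eq_inv_mul_iff_mul_eq]; exact key
  rw [k2]
  group

end Rel

section Pres
variable {r s t u : ℤ}

lemma rel1 : (PresentedGroup.of 0 * PresentedGroup.of 1 * (PresentedGroup.of 0)⁻¹
    * PresentedGroup.of 1 : SapphireGroup r s t u) = 1 :=
  PresentedGroup.one_of_mem (rels := sapphireRels r s t u) (by left; rfl)

lemma rel2 : (PresentedGroup.of 2 ^ (2 : ℤ) * PresentedGroup.of 0 ^ (-(2 * r))
    * PresentedGroup.of 1 ^ (-s) : SapphireGroup r s t u) = 1 :=
  PresentedGroup.one_of_mem (rels := sapphireRels r s t u) (by right; left; rfl)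

lemma rel3 : (PresentedGroup.of 2 * PresentedGroup.of 0 ^ (2 * t) * PresentedGroup.of 1 ^ u
    * (PresentedGroup.of 2)⁻¹ * PresentedGroup.of 0 ^ (2 * t)
    * PresentedGroup.of 1 ^ u : SapphireGroup r s t u) = 1 :=
  PresentedGroup.one_of_mem (rels := sapphireRels r s t u) (by right; right; rfl)

/-- Universal property. -/
lemma exists_lift {K : Type*} [Group K] (a b c : K) (h1 : a * b * a⁻¹ * b = 1)
    (h2 : c ^ (2 : ℤ) * a ^ (-(2 * r)) * b ^ (-s) = 1)
    (h3 : c * a ^ (2 * t) * b ^ u * c⁻¹ * a ^ (2 * t) * b ^ u = 1) :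
    ∃ f : SapphireGroup r s t u →* K, f (PresentedGroup.of 0) = a ∧
      f (PresentedGroup.of 1) = b ∧ f (PresentedGroup.of 2) = c := by
  have hf : ∀ x ∈ sapphireRels r s t u, FreeGroup.lift ![a, b, c] x = 1 := by
    rintro x (rfl | rfl | rfl)
    · simpa using h1
    · simpa using h2
    · simpa using h3
  refine ⟨PresentedGroup.toGroup hf, ?_, ?_, ?_⟩ <;> simp [PresentedGroup.toGroup.of]

lemma induct {P : SapphireGroup r s t u → Prop} (h0 : P (PresentedGroup.of 0))
    (h1 : P (PresentedGroup.of 1)) (h2 : P (PresentedGroup.of 2)) (hone : P 1)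
    (hmul : ∀ x y, P x → P y → P (x * y)) (hinv : ∀ x, P x → P x⁻¹) (x) : P x := by
  have hx : x ∈ Subgroup.closure (Set.range (PresentedGroup.of (rels := sapphireRels r s t u))) := by
    rw [PresentedGroup.closure_range_of]; trivial
  induction hx using Subgroup.closure_induction with
  | mem x hx =>
    obtain ⟨i, rfl⟩ := hx
    fin_cases i
    · exact h0
    · exact h1
    · exact h2
  | one => exact hone
  | mul x y _ _ hx hy => exact hmul x y hx hy
  | inv x _ hx => exact hinv x hx

end Pres

lemma main (r m t k : ℤ)
    (φ : SapphireGroup r (2 * m) t (2 * k + 1) →* Multiplicative (ZMod 2))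
    (p0 : φ (PresentedGroup.of 0) = Multiplicative.ofAdd (0 : ZMod 2))
    (p1 : φ (PresentedGroup.of 1) = Multiplicative.ofAdd (1 : ZMod 2))
    (p2 : φ (PresentedGroup.of 2) = Multiplicative.ofAdd (1 : ZMod 2)) :
    Nonempty (φ.ker ≃* SapphireGroup r m (2 * t) (2 * k + 1)) := by
  obtain ⟨Θ, T0, T1, T2⟩ := exists_lift (r := r) (s := 2 * m) (t := t) (u := 2 * k + 1) _ _ _
    (perm1 (rel1 (r := r) (s := m) (t := 2 * t) (u := 2 * k + 1)))
    (perm2 (t := t) (k := k) rel1 rel2) (perm3 rel1 rel3)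
  have g1 := rel1 (r := r) (s := 2 * m) (t := t) (u := 2 * k + 1)
  have g2 := rel2 (r := r) (s := 2 * m) (t := t) (u := 2 * k + 1)
  have g3 := rel3 (r := r) (s := 2 * m) (t := t) (u := 2 * k + 1)
  generalize hA : (PresentedGroup.of 0 : SapphireGroup r (2 * m) t (2 * k + 1)) = A at *
  generalize hB : (PresentedGroup.of 1 : SapphireGroup r (2 * m) t (2 * k + 1)) = B at *
  generalize hC : (PresentedGroup.of 2 : SapphireGroup r (2 * m) t (2 * k + 1)) = C at *
  have e : A * B = B⁻¹ * A := mul_inv_eq_iff_eq_mul.1 (eq_inv_of_mul_eq_one_left g1)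
  set X := A ^ (2 * t) * B ^ (2 * k + 1) with hX
  have g3' : C * X = X⁻¹ * C := by
    refine mul_inv_eq_iff_eq_mul.1 (eq_inv_of_mul_eq_one_left ?_)
    rw [← g3, hX]; simp only [mul_assoc]
  have hBX : Commute B X :=
    Commute.mul_right (by simpa using (even_comm g1 t 1).symm) ((Commute.refl B).zpow_right _)
  have b2 (n : ℤ) : (B ^ (2 : ℤ)) ^ n = B ^ (2 * n) := (zpow_mul _ _ _).symm
  have XX : A ^ (2 * (2 * t)) * (B ^ (2 : ℤ)) ^ (2 * k + 1) = X * X := by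
    rw [b2, hX]
    have := (even_comm g1 t (2 * k + 1)).eq
    rw [mul_assoc, ← mul_assoc (B ^ _), ← this, two_mul (2 * t), zpow_add,
      two_mul (2 * k + 1), zpow_add]
    simp only [mul_assoc]
  obtain ⟨ψ, S0, S1, S2⟩ := exists_lift (r := r) (s := m) (t := 2 * t) (u := 2 * k + 1)
    A (B ^ (2 : ℤ)) (C * X)
    (by
      have h' : A * B * A⁻¹ = B⁻¹ := by rw [e]; group
      calc A * B ^ (2 : ℤ) * A⁻¹ * B ^ (2 : ℤ)
          = (A * B * A⁻¹) * (A * B * A⁻¹) * (B * B) := by rw [zpow_two]; group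
        _ = 1 := by rw [h']; group)
    (by
      rw [b2, ← g2, show 2 * -m = -(2 * m) by ring]
      congr 2
      rw [zpow_two, zpow_two]
      nth_rw 1 [g3']
      rw [g3']
      have : C * X⁻¹ = X * C := by
        rw [mul_inv_eq_iff_eq_mul, mul_assoc, g3']; group
      rw [← g3', mul_assoc, ← mul_assoc X, ← this]
      group)
    (by
      have : C * X * (X * X) * (C * X)⁻¹ * (X * X) = 1 := by
        have h : X * (C * X) = C := by rw [g3']; group
        have h' : C * X * C⁻¹ = X⁻¹ := by rw [g3']; group
        calc C * X * (X * X) * (C * X)⁻¹ * (X * X)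
            = (C * X * C⁻¹) * (C * X * C⁻¹) * (X * X) := by group
          _ = 1 := by rw [h']; group
      rw [← XX] at this
      simpa only [mul_assoc] using this)
  have act : ∀ g h, Θ (ψ g) (Sum.inl h) = Sum.inl (g * h) := by
    refine induct ?_ ?_ ?_ ?_ ?_ ?_
    · intro h; rw [S0, T0]; rfl
    · intro h; rw [S1, map_zpow, T1]; rw [zpow_two]; simp
    · intro h
      rw [S2, map_mul, hX, map_mul, map_zpow, map_zpow, T0, T1, T2, pA_zpow, pB_odd,
        ab_even rel1]
      simp only [Equiv.Perm.mul_apply, pD_inl, pA_inr, pD_inr]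
      congr 1
      group
    · intro h; simp
    · intro x y hx hy h; rw [map_mul, map_mul, Equiv.Perm.mul_apply, hy, hx, mul_assoc]
    · intro x hx h
      rw [map_inv, map_inv, Equiv.Perm.inv_eq_iff_eq, hx]; simp
  have inj : Function.Injective ψ := by
    intro x y hxy
    have hx := act x 1
    rw [hxy, act y 1] at hx
    simpa using hx.symm
  let F : SapphireGroup r m (2 * t) (2 * k + 1) ⊕ SapphireGroup r m (2 * t) (2 * k + 1) →
      SapphireGroup r (2 * m) t (2 * k + 1) := Sum.elim (fun h => ψ h) (fun h => B * ψ h)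
  have equi : ∀ g p, F (Θ g p) = g * F p := by
    refine induct ?_ ?_ ?_ ?_ ?_ ?_
    · rw [hA, T0]
      rintro (h | h)
      · simp [F, S0]
      · simp only [pA_inr, F, Sum.elim_inr, map_mul, S0, S1]
        simp only [← mul_assoc]
        congr 1
        rw [mul_assoc B, zpow_two, ← mul_assoc A, e]
        rw [show B * (B⁻¹ * A * B) = A * B by group, e]
    · rw [hB, T1]
      rintro (h | h)
      · simp [F]
      · simp [F, S1, pow_two, mul_assoc]
    · rw [hC, T2]
      rintro (h | h)
      · simp only [pD_inl, F, Sum.elim_inr, Sum.elim_inl, map_mul, map_zpow, S0, S1, S2, b2]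
        rw [← mul_assoc]
        congr 1
        have : B * (A ^ (2 * t) * B ^ (2 * k)) = X := by
          rw [hX, zpow_add_one, ← mul_assoc, ← mul_assoc]
          have hc : Commute B (A ^ (2 * t) * B ^ (2 * k)) :=
            Commute.mul_right (by simpa using (even_comm g1 t 1).symm)
              ((Commute.refl B).zpow_right _)
          rw [mul_assoc, hc.eq]
        rw [← mul_assoc, this, g3']; group
      · simp only [pD_inr, F, Sum.elim_inr, Sum.elim_inl, map_mul, map_inv, map_zpow, S0, S1,
          S2, b2]
        rw [← mul_assoc C B]
        congr 1
        have : X = B * (A ^ (2 * t) * B ^ (2 * k)) := by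
          rw [hX, zpow_add_one, ← mul_assoc]
          have hc : Commute B (A ^ (2 * t) * B ^ (2 * k)) :=
            Commute.mul_right (by simpa using (even_comm g1 t 1).symm)
              ((Commute.refl B).zpow_right _)
          rw [hc.eq]
        rw [this]; group
    · intro p; simp
    · intro x y hx hy p; rw [map_mul, Equiv.Perm.mul_apply, hx, hy, mul_assoc]
    · intro x hx p
      rw [eq_inv_mul_iff_mul_eq, ← hx, ← Equiv.Perm.mul_apply, ← map_mul]; simp
  have two : ∀ z : Multiplicative (ZMod 2), z * z = 1 := by decide
  have ψker : ∀ g, φ (ψ g) = 1 := by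
    have hs : φ.comp ψ = 1 := by
      have hz : (Multiplicative.ofAdd (0 : ZMod 2)) = 1 := rfl
      apply PresentedGroup.ext
      intro i
      fin_cases i
      · simp [S0, p0]
      · simp [S1, pow_two, two]
      · simp [S2, hX, p0, p1, p2, zpow_add, zpow_mul, pow_two, two]
    intro g; exact DFunLike.congr_fun hs g
  have rng : ψ.range = φ.ker := by
    ext g
    rw [MonoidHom.mem_range, MonoidHom.mem_ker]
    constructor
    · rintro ⟨x, rfl⟩; exact ψker x
    · intro hg
      have h := equi g (Sum.inl 1)
      simp only [F, Sum.elim_inl, map_one, mul_one] at h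
      rcases hp : Θ g (Sum.inl 1) with x | x
      · rw [hp] at h; exact ⟨x, h⟩
      · rw [hp] at h
        simp only [Sum.elim_inr] at h
        rw [← h, map_mul, ψker, p1] at hg
        exact absurd hg (by decide)
  exact ⟨((MonoidHom.ofInjective inj).trans (MulEquiv.subgroupCongr rng)).symm⟩

end Sapphire

theorem stmt6 (r s t u : ℤ) (h : r * u - s * t = 1 ∨ r * u - s * t = -1) (hs : Even s) :
    (∃! φ : SapphireGroup r s t u →* Multiplicative (ZMod 2),
      φ (PresentedGroup.of 0) = Multiplicative.ofAdd (0 : ZMod 2) ∧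
      φ (PresentedGroup.of 1) = Multiplicative.ofAdd (1 : ZMod 2) ∧
      φ (PresentedGroup.of 2) = Multiplicative.ofAdd (1 : ZMod 2)) ∧
    ∀ φ : SapphireGroup r s t u →* Multiplicative (ZMod 2),
      φ (PresentedGroup.of 0) = Multiplicative.ofAdd (0 : ZMod 2) →
      φ (PresentedGroup.of 1) = Multiplicative.ofAdd (1 : ZMod 2) →
      φ (PresentedGroup.of 2) = Multiplicative.ofAdd (1 : ZMod 2) →
      Nonempty (φ.ker ≃* SapphireGroup r (s / 2) (2 * t) u) := by
  obtain ⟨m, rfl⟩ := hs.exists_two_nsmul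
  have hu : Odd u := by
    by_contra hu
    rw [Int.not_odd_iff_even] at hu
    obtain ⟨v, rfl⟩ := hu
    have : r * (v + v) - (2 • m) * t = 2 * (r * v - m * t) := by
      simp only [smul_eq_mul, nsmul_eq_mul]; push_cast; ring
    omega
  obtain ⟨k, rfl⟩ := hu
  have hm : (2 • m : ℤ) = 2 * m := by simp
  rw [hm]
  have two : ∀ z : Multiplicative (ZMod 2), z * z = 1 := by decide
  refine ⟨?_, ?_⟩
  · obtain ⟨f, f0, f1, f2⟩ := Sapphire.exists_lift (r := r) (s := 2 * m) (t := t) (u := 2 * k + 1)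
      (Multiplicative.ofAdd (0 : ZMod 2)) (Multiplicative.ofAdd (1 : ZMod 2))
      (Multiplicative.ofAdd (1 : ZMod 2)) (by decide)
      (by simp [zpow_mul, pow_two, two])
      (by simp [zpow_add, zpow_mul, pow_two, two])
    refine ⟨f, ⟨f0, f1, f2⟩, ?_⟩
    rintro g ⟨q0, q1, q2⟩
    apply PresentedGroup.ext
    intro i
    fin_cases i
    · exact q0.trans f0.symm
    · exact q1.trans f1.symm
    · exact q2.trans f2.symm
  · intro φ p0 p1 p2
    rw [Int.mul_ediv_cancel_left m two_ne_zero]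
    exact Sapphire.main r m t k φ p0 p1 p2
end

section
/- Let r,s,t,u be integers with ru−st=±1 and s even. Then there is a (unique) group homomorphism φ₇ : G(r,s,t,u) → ℤ/2ℤ sending the generators a ↦ 1, b ↦ 1, c ↦ 1, and its kernel is isomorphic, as an abstract group, to G(r, s/2, 2t, u). -/
namespace Sapph

variable {E : Type*} [Group E]

/-- The element `a^(2m) b^n`. -/
def T (a b : E) (m n : ℤ) : E := a ^ (2 * m) * b ^ n

/-- `a, b, c` satisfy the sapphire relations (normalized form). -/
structure Sap (r s t u : ℤ) (a b c : E) : Prop where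
  h1 : a * b * a⁻¹ * b = 1
  h2 : c * c = T a b r s
  h3 : SemiconjBy c (T a b t u) (T a b (-t) (-u))

theorem comm {a b : E} (h : a * b * a⁻¹ * b = 1) (m n : ℤ) : Commute (a ^ (2 * m)) (b ^ n) := by
  have h' : SemiconjBy a b b⁻¹ := by
    rw [SemiconjBy, ← mul_inv_eq_iff_eq_mul]; exact eq_inv_of_mul_eq_one_left h
  have h2 : Commute (a ^ (2:ℤ)) b := by
    have := (h'.inv_right).mul_left h'
    rw [inv_inv] at this
    rw [zpow_two]; exact this
  rw [zpow_mul]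
  exact (h2.zpow_left m).zpow_right n

theorem T_mul {a b : E} (h : a * b * a⁻¹ * b = 1) (m n m' n' : ℤ) :
    T a b m n * T a b m' n' = T a b (m + m') (n + n') := by
  unfold T
  rw [mul_add, zpow_add, zpow_add, mul_assoc, ← mul_assoc (b ^ n), ← (comm h m' n).eq]
  simp only [mul_assoc]

theorem T_zero (a b : E) : T a b 0 0 = 1 := by simp [T]

theorem T_inv {a b : E} (h : a * b * a⁻¹ * b = 1) (m n : ℤ) :
    (T a b m n)⁻¹ = T a b (-m) (-n) := by
  rw [inv_eq_iff_mul_eq_one, T_mul h]; simp [T]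

theorem T_zpow {a b : E} (h : a * b * a⁻¹ * b = 1) (m n k : ℤ) :
    (T a b m n) ^ k = T a b (m * k) (n * k) := by
  unfold T
  rw [(comm h m n).mul_zpow, ← zpow_mul, ← zpow_mul, mul_assoc]

theorem T_b (a b : E) : T a b 0 1 = b := by simp [T]

theorem sap_iff (r s t u : ℤ) (a b c : E) : Sap r s t u a b c ↔
    (a * b * a⁻¹ * b = 1 ∧ c ^ (2 : ℤ) * a ^ (-(2 * r)) * b ^ (-s) = 1 ∧
     c * a ^ (2 * t) * b ^ u * c⁻¹ * a ^ (2 * t) * b ^ u = 1) := by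
  have key : ∀ h : a * b * a⁻¹ * b = 1,
      (c * c = T a b r s ↔ c ^ (2 : ℤ) * a ^ (-(2 * r)) * b ^ (-s) = 1) ∧
      (SemiconjBy c (T a b t u) (T a b (-t) (-u)) ↔
        c * a ^ (2 * t) * b ^ u * c⁻¹ * a ^ (2 * t) * b ^ u = 1) := by
    intro h
    constructor
    · have : c ^ (2 : ℤ) * a ^ (-(2 * r)) * b ^ (-s) = c * c * (T a b r s)⁻¹ := by
        rw [T_inv h, T, zpow_two, mul_neg, mul_assoc]
      rw [this, mul_inv_eq_one]
    · have : c * a ^ (2 * t) * b ^ u * c⁻¹ * a ^ (2 * t) * b ^ u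
          = c * T a b t u * c⁻¹ * T a b t u := by
        simp only [T, mul_assoc]
      rw [this, ← T_inv h, SemiconjBy, ← mul_inv_eq_iff_eq_mul, mul_eq_one_iff_eq_inv]
  constructor
  · rintro ⟨h1, h2, h3⟩
    exact ⟨h1, (key h1).1.1 h2, (key h1).2.1 h3⟩
  · rintro ⟨h1, h2, h3⟩
    exact ⟨h1, (key h1).1.2 h2, (key h1).2.2 h3⟩

theorem Sap.v {r s t u : ℤ} {a b c : E} (H : Sap r s t u a b c) :
    SemiconjBy c (T a b r s) (T a b r s) := by
  rw [← H.h2]; simp [SemiconjBy, mul_assoc]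

theorem Sap.conj {r s t u : ℤ} {a b c : E} (H : Sap r s t u a b c) (x y : ℤ) {m n m' n' : ℤ}
    (e1 : m = r * x + t * y) (e2 : n = s * x + u * y)
    (e3 : m' = r * x - t * y) (e4 : n' = s * x - u * y) :
    SemiconjBy c (T a b m n) (T a b m' n') := by
  have := (H.v.zpow_right x).mul_right (H.h3.zpow_right y)
  simp only [T_zpow H.h1, T_mul H.h1] at this
  subst e1 e2 e3 e4
  have e5 : r * x - t * y = r * x + -t * y := by ring
  have e6 : s * x - u * y = s * x + -u * y := by ring
  rw [e5, e6]; exact this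

/-- conjugation of `b` by `c` -/
theorem Sap.conj_b {r s t u : ℤ} {a b c : E} (H : Sap r s t u a b c) {e : ℤ}
    (he : e = r * u - s * t) (hee : e * e = 1) :
    SemiconjBy c b (T a b (-(2 * (e * r) * t)) (1 - 2 * (e * r) * u)) := by
  have := H.conj (-(e * t)) (e * r) (m := 0) (n := 1)
    (m' := -(2 * (e * r) * t)) (n' := 1 - 2 * (e * r) * u) (by ring)
    (by rw [← hee]; nth_rw 2 [he]; ring) (by ring)
    (by rw [← hee]; nth_rw 2 [he]; ring)
  rwa [T_b] at this

theorem sq_ab {a b : E} (h : a * b * a⁻¹ * b = 1) (m n : ℤ) :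
    T (a * b) (b * b) m n = T a b m (2 * n) := by
  have h' : b * (a * b) = a := by
    have : a * b * a⁻¹ = b⁻¹ := eq_inv_of_mul_eq_one_left h
    have : a * b = b⁻¹ * a := by rw [← this]; group
    rw [this]; group
  have : (a * b) ^ (2:ℤ) = a ^ (2:ℤ) := by
    rw [zpow_two, zpow_two, mul_assoc, h']
  unfold T
  rw [zpow_mul, this, ← zpow_mul, ← zpow_two, ← zpow_mul]

theorem Sap.down {r σ t u : ℤ} {a b c : E} (H : Sap r (2 * σ) t u a b c) :
    Sap r σ (2 * t) u (a * b) (b * b) (c * T a b t u) := by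
  have h1 := H.h1
  refine ⟨?_, ?_, ?_⟩
  · have h' : a * b = b⁻¹ * a := by
      have : a * b * a⁻¹ = b⁻¹ := eq_inv_of_mul_eq_one_left h1
      rw [← this]; group
    calc a * b * (b * b) * (a * b)⁻¹ * (b * b) = (a * b) * b * a⁻¹ * b * b := by group
      _ = b⁻¹ * (a * b * a⁻¹ * b) * b := by nth_rw 1 [h']; group
      _ = 1 := by rw [h1]; group
  · rw [sq_ab h1, ← H.h2]
    have := H.h3.eq
    calc c * T a b t u * (c * T a b t u) = c * T a b t u * (T a b (-t) (-u) * c) := by rw [this]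
      _ = c * c := by rw [← T_inv h1]; group
  · rw [sq_ab h1, sq_ab h1]
    have h4 := H.conj 0 2 (m := 2 * t) (n := 2 * u) (m' := -(2 * t)) (n' := 2 * -u)
      (by ring) (by ring) (by ring) (by ring)
    refine h4.mul_left ?_
    rw [SemiconjBy, T_mul h1, T_mul h1, add_comm, add_comm u]

theorem Sap.down_conj {r σ t u : ℤ} {a b c : E} (H : Sap r (2 * σ) t u a b c) {e : ℤ}
    (he : e = r * u - 2 * σ * t) (hee : e * e = 1) :
    b * (a * b) * b⁻¹ = a * b * (b * b)⁻¹ ∧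
    b * (c * T a b t u) * b⁻¹ =
      T (a * b) (b * b) (2 * t * (e * r)) (u * (e * r)) * (c * T a b t u) := by
  have h1 := H.h1
  have h' : a * b = b⁻¹ * a := by
    have : a * b * a⁻¹ = b⁻¹ := eq_inv_of_mul_eq_one_left h1
    rw [← this]; group
  constructor
  · calc b * (a * b) * b⁻¹ = a * b⁻¹ := by rw [h']; group
      _ = _ := by group
  · have h4 := (H.conj_b he hee).eq
    have h5 : b * T a b t u = T a b t u * b := by
      nth_rw 1 [← T_b a b]; nth_rw 4 [← T_b a b]
      rw [T_mul h1, T_mul h1, add_comm, add_comm u]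
    rw [mul_inv_eq_iff_eq_mul, sq_ab h1]
    simp only [mul_assoc]
    rw [← h5, ← mul_assoc c, h4]
    simp only [← mul_assoc]
    rw [T_mul h1]
    congr 2
    nth_rw 1 [← T_b a b]
    congr 1 <;> ring

theorem T_tau {a b : E} (h : a * b * a⁻¹ * b = 1) (m n : ℤ) :
    T (a * b⁻¹) b m n = T a b m n := by
  have h' : b⁻¹ * (a * b⁻¹) = a := by
    have : a * b * a⁻¹ = b⁻¹ := eq_inv_of_mul_eq_one_left h
    have h3 : a * b = b⁻¹ * a := by rw [← this]; group
    rw [← mul_assoc, ← h3]; group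
  have : (a * b⁻¹) ^ (2:ℤ) = a ^ (2:ℤ) := by
    rw [zpow_two, zpow_two, mul_assoc, h']
  unfold T
  rw [zpow_mul, this, ← zpow_mul]

theorem Sap.tau {r s t u : ℤ} {a b c : E} (H : Sap r s t u a b c) (k : ℤ) :
    Sap r s t u (a * b⁻¹) b (T a b (t * k) (u * k) * c) := by
  have h1 := H.h1
  refine ⟨?_, ?_, ?_⟩
  · rw [← h1]; group
  · rw [T_tau h1, ← H.h2]
    have := (H.conj 0 k (m := t * k) (n := u * k) (m' := -(t * k)) (n' := -(u * k))
      (by ring) (by ring) (by ring) (by ring)).eq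
    rw [← mul_assoc, mul_assoc _ c, this, ← T_inv h1]; group
  · rw [T_tau h1, T_tau h1]
    refine SemiconjBy.mul_left ?_ H.h3
    rw [SemiconjBy, T_mul h1, T_mul h1, add_comm, add_comm (u * k)]

theorem Sap.up {r σ t u : ℤ} {a b c B : E} (H : Sap r σ (2 * t) u a b c) {e : ℤ}
    (he : e = r * u - 2 * σ * t) (hee : e * e = 1)
    (hb : B * B = b) (ha : B * a * B⁻¹ = a * b⁻¹)
    (hc : B * c * B⁻¹ = T a b (2 * t * (e * r)) (u * (e * r)) * c) :
    Sap r (2 * σ) t u (a * B⁻¹) B (c * (T (a * B⁻¹) B t u)⁻¹) := by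
  have h1 : (a * B⁻¹) * B * (a * B⁻¹)⁻¹ * B = 1 := by
    subst hb
    have h0 : a * B = B⁻¹ * a := by
      rw [eq_inv_mul_iff_mul_eq]
      calc B * (a * B) = B * a * B⁻¹ * (B * B) := by group
        _ = a := by rw [ha]; group
    calc (a * B⁻¹) * B * (a * B⁻¹)⁻¹ * B = a * B * a⁻¹ * B := by group
      _ = 1 := by rw [h0]; group
  have hT : ∀ m n, T a b m n = T (a * B⁻¹) B m (2 * n) := by
    intro m n
    rw [← sq_ab h1, hb]; congr 1; group
  have hv := H.v
  have hw := H.h3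
  rw [hT] at hv
  rw [hT, hT] at hw
  rw [hT] at hc
  have h2 := H.h2
  rw [hT] at h2
  have hB : SemiconjBy c (T (a * B⁻¹) B 0 1)
      (T (a * B⁻¹) B (-(2 * t * (e * r))) (1 - 2 * (u * (e * r)))) := by
    rw [mul_inv_eq_iff_eq_mul, mul_assoc, ← inv_mul_eq_iff_eq_mul, T_inv h1] at hc
    rw [T_b, SemiconjBy, ← hc, ← mul_assoc]
    congr 1
    nth_rw 3 [← T_b (a * B⁻¹) B]
    rw [T_mul h1]; congr 1 <;> ring
  have hW : SemiconjBy c (T (a * B⁻¹) B t u) (T (a * B⁻¹) B (-t) (-u)) := by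
    have := ((hv.zpow_right (e * u * t)).mul_right (hw.zpow_right (-(e * σ * t)))).mul_right
      (hB.zpow_right u)
    simp only [T_zpow h1, T_mul h1] at this
    have q : e * (r * u - 2 * σ * t) = 1 := by rw [← he]; exact hee
    have e1 : r * (e * u * t) + 2 * t * -(e * σ * t) + 0 * u = t := by
      linear_combination t * q
    have e2 : 2 * σ * (e * u * t) + 2 * u * -(e * σ * t) + 1 * u = u := by ring
    have e3 : r * (e * u * t) + -(2 * t) * -(e * σ * t) + -(2 * t * (e * r)) * u = -t := by
      linear_combination (-t) * q
    have e4 : 2 * σ * (e * u * t) + 2 * -u * -(e * σ * t) + (1 - 2 * (u * (e * r))) * u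
        = -u := by
      linear_combination (-2 * u) * q
    rwa [e1, e2, e3, e4] at this
  refine ⟨h1, ?_, ?_⟩
  · rw [← h2]
    have := hW.inv_right.eq
    rw [T_inv h1 (-t), neg_neg, neg_neg] at this
    nth_rw 2 [this]
    group
  · refine hW.mul_left ?_
    rw [T_inv h1, SemiconjBy, T_mul h1, T_mul h1, add_comm, add_comm u]

theorem of_sap (r s t u : ℤ) : Sap r s t u (PresentedGroup.of 0 : SapphireGroup r s t u)
    (PresentedGroup.of 1) (PresentedGroup.of 2) := by
  rw [sap_iff]
  have : ∀ x ∈ sapphireRels r s t u, PresentedGroup.mk (sapphireRels r s t u) x = 1 :=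
    fun x hx => PresentedGroup.one_of_mem hx
  refine ⟨?_, ?_, ?_⟩
  · simpa [PresentedGroup.of] using this _ (Or.inl rfl)
  · simpa [PresentedGroup.of] using this _ (Or.inr (Or.inl rfl))
  · simpa [PresentedGroup.of] using this _ (Or.inr (Or.inr rfl))

theorem lift_ok {r s t u : ℤ} {a b c : E} (H : Sap r s t u a b c) :
    ∀ x ∈ sapphireRels r s t u, FreeGroup.lift ![a, b, c] x = 1 := by
  obtain ⟨h1, h2, h3⟩ := (sap_iff _ _ _ _ _ _ _).1 H
  rintro x (rfl | rfl | rfl)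
  · simpa using h1
  · simpa using h2
  · simpa using h3

/-- The homomorphism out of the sapphire group. -/
def lift {r s t u : ℤ} {a b c : E} (H : Sap r s t u a b c) : SapphireGroup r s t u →* E :=
  PresentedGroup.toGroup (lift_ok H)

section
variable {r s t u : ℤ} {a b c : E} (H : Sap r s t u a b c)
theorem lift_0 : lift H (PresentedGroup.of 0) = a := by simp [lift]
theorem lift_1 : lift H (PresentedGroup.of 1) = b := by simp [lift]
theorem lift_2 : lift H (PresentedGroup.of 2) = c := by simp [lift]

theorem hom_ext {f g : SapphireGroup r s t u →* E}
    (h0 : f (PresentedGroup.of 0) = g (PresentedGroup.of 0))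
    (h1 : f (PresentedGroup.of 1) = g (PresentedGroup.of 1))
    (h2 : f (PresentedGroup.of 2) = g (PresentedGroup.of 2)) : f = g := by
  ext i; fin_cases i <;> assumption

theorem map_T {F : Type*} [Group F] (f : E →* F) (m n : ℤ) :
    f (T a b m n) = T (f a) (f b) m n := by simp [T]
end

/-- Left multiplication by `G` on `G × Bool`. -/
def L {G : Type*} [Group G] : G →* Equiv.Perm (G × Bool) where
  toFun g := ⟨fun p => (g * p.1, p.2), fun p => (g⁻¹ * p.1, p.2), fun p => by simp,
    fun p => by simp⟩
  map_one' := by ext p <;> simp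
  map_mul' g h := by ext p <;> simp [mul_assoc]

theorem L_apply {G : Type*} [Group G] (g : G) (p : G × Bool) : L g p = (g * p.1, p.2) := rfl

theorem exists_B {G : Type*} [Group G] (τ : G →* G) (β : G) (hβ : τ β = β)
    (hτ : ∀ g, τ (τ g) = β * g * β⁻¹) :
    ∃ B : Equiv.Perm (G × Bool), B * B = L β ∧ ∀ g, B * L g * B⁻¹ = L (τ g) := by
  let f : G × Bool → G × Bool := fun p => if p.2 then (τ p.1 * β, false) else (τ p.1, true)
  have hf : ∀ p, f (f p) = L β p := by
    rintro ⟨g, _ | _⟩ <;> simp [f, hτ, hβ, L_apply]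
  have bij : Function.Bijective f := by
    constructor
    · intro p q hpq
      have := congrArg f hpq
      rw [hf, hf] at this
      exact (L β).injective this
    · intro p
      obtain ⟨q, rfl⟩ := (L β).surjective p
      exact ⟨f q, hf q⟩
  refine ⟨Equiv.ofBijective f bij, ?_, ?_⟩
  · refine Equiv.ext fun p => ?_
    exact hf p
  · intro g
    rw [mul_inv_eq_iff_eq_mul]
    refine Equiv.ext fun p => ?_
    change f (L g p) = L (τ g) (f p)
    rcases p with ⟨x, _ | _⟩ <;> simp [f, L_apply, mul_assoc]

theorem exists_tau (r s t u e : ℤ) (he : e = r * u - s * t) (hee : e * e = 1) :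
    ∃ τ : SapphireGroup r s t u →* SapphireGroup r s t u,
      τ (.of 0) = .of 0 * (.of 1)⁻¹ ∧ τ (.of 1) = .of 1 ∧
      τ (.of 2) = T (.of 0) (.of 1) (t * (e * r)) (u * (e * r)) * .of 2 ∧
      ∀ g, τ (τ g) = .of 1 * g * (.of 1)⁻¹ := by
  have H := of_sap r s t u
  have h1 := H.h1
  refine ⟨lift (H.tau (e * r)), lift_0 _, lift_1 _, lift_2 _, ?_⟩
  have : (lift (H.tau (e * r))).comp (lift (H.tau (e * r)))
      = (MulAut.conj (PresentedGroup.of 1)).toMonoidHom := by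
    apply hom_ext
    · simp only [MonoidHom.comp_apply, lift_0, lift_1, map_mul, map_inv]
      have : (PresentedGroup.of 0 * PresentedGroup.of 1 * (PresentedGroup.of 0)⁻¹ :
        SapphireGroup r s t u) = (PresentedGroup.of 1)⁻¹ := eq_inv_of_mul_eq_one_left h1
      have : (PresentedGroup.of 0 * PresentedGroup.of 1  :
        SapphireGroup r s t u) = (PresentedGroup.of 1)⁻¹ * PresentedGroup.of 0 := by
        rw [← this]; group
      simp only [MulEquiv.toMonoidHom_eq_coe, MonoidHom.coe_coe, MulAut.conj_apply]
      congr 1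
      rw [mul_inv_eq_iff_eq_mul, mul_assoc, this]; group
    · simp only [MonoidHom.comp_apply, lift_1]
      simp
    · simp only [MonoidHom.comp_apply, lift_2, map_mul, map_T, lift_0, lift_1]
      rw [T_tau h1, ← mul_assoc, T_mul h1]
      simp only [MulEquiv.toMonoidHom_eq_coe, MonoidHom.coe_coe, MulAut.conj_apply]
      have h4 := (H.conj_b he hee).eq
      rw [eq_mul_inv_iff_mul_eq, mul_assoc, h4, ← mul_assoc, T_mul h1]
      congr 1
      conv_rhs => rw [← T_b (PresentedGroup.of 0) (PresentedGroup.of 1)]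
      congr 1 <;> ring
  intro g
  exact DFunLike.congr_fun this g

/-- The embedding. -/
def psi (r σ t u : ℤ) : SapphireGroup r σ (2 * t) u →* SapphireGroup r (2 * σ) t u :=
  lift (of_sap r (2 * σ) t u).down

theorem psi_inj (r σ t u e : ℤ) (he : e = r * u - 2 * σ * t) (hee : e * e = 1) :
    Function.Injective (psi r σ t u) := by
  obtain ⟨τ, h0, h1, h2, h3⟩ := exists_tau r σ (2 * t) u e (by rw [he]; ring) hee
  obtain ⟨B, hB, hBL⟩ := exists_B τ _ h1 h3
  have H := of_sap r σ (2 * t) u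
  have HL : Sap r σ (2 * t) u (L (PresentedGroup.of 0 : SapphireGroup r σ (2 * t) u))
      (L (PresentedGroup.of 1)) (L (PresentedGroup.of 2)) := by
    refine ⟨?_, ?_, ?_⟩
    · simpa using congrArg L H.h1
    · rw [← map_T, ← map_mul, H.h2]
    · rw [← map_T, ← map_T]; exact H.h3.map L
  have U := HL.up he hee hB (by rw [hBL, h0]; simp) (by rw [hBL, h2, map_mul, map_T])
  have : (lift U).comp (psi r σ t u) = L := by
    apply hom_ext
    · simp [psi, lift_0, lift_1]
    · simp [psi, lift_1, hB]
    · simp [psi, lift_0, lift_1, lift_2, map_T]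
  intro x y hxy
  have h := congrArg (lift U) hxy
  rw [← MonoidHom.comp_apply, ← MonoidHom.comp_apply, this] at h
  have := DFunLike.congr_fun h (1, false)
  simpa [L_apply] using this

theorem cover (r σ t u e : ℤ) (he : e = r * u - 2 * σ * t) (hee : e * e = 1)
    (x : SapphireGroup r (2 * σ) t u) :
    ∃ g, x = psi r σ t u g ∨ x = psi r σ t u g * .of 1 := by
  obtain ⟨τ, h0, h1, h2, h3⟩ := exists_tau r σ (2 * t) u e (by rw [he]; ring) hee
  have H := of_sap r (2 * σ) t u
  obtain ⟨d1, d2⟩ := H.down_conj he hee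
  have p0 : psi r σ t u (.of 0) = .of 0 * .of 1 := lift_0 _
  have p1 : psi r σ t u (.of 1) = .of 1 * .of 1 := lift_1 _
  have p2 : psi r σ t u (.of 2) = .of 2 * T (.of 0) (.of 1) t u := lift_2 _
  have hτ : ∀ g, PresentedGroup.of 1 * psi r σ t u g * (PresentedGroup.of 1)⁻¹
      = psi r σ t u (τ g) := by
    have : (MulAut.conj (PresentedGroup.of 1)).toMonoidHom.comp (psi r σ t u)
        = (psi r σ t u).comp τ := by
      apply hom_ext
      · simp only [MonoidHom.comp_apply, MulEquiv.toMonoidHom_eq_coe, MonoidHom.coe_coe,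
          MulAut.conj_apply]
        rw [h0, map_mul, map_inv, p0, p1, d1]
      · simp only [MonoidHom.comp_apply, MulEquiv.toMonoidHom_eq_coe, MonoidHom.coe_coe,
          MulAut.conj_apply]
        rw [h1, p1]; group
      · simp only [MonoidHom.comp_apply, MulEquiv.toMonoidHom_eq_coe, MonoidHom.coe_coe,
          MulAut.conj_apply]
        rw [h2, map_mul, map_T, p0, p1, p2, d2]
    exact fun g => DFunLike.congr_fun this g
  have hτ' : ∀ g, PresentedGroup.of 1 * psi r σ t u g
      = psi r σ t u (τ g) * (PresentedGroup.of 1) := fun g => by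
    rw [← hτ]; group
  let S : Subgroup (SapphireGroup r (2 * σ) t u) :=
    { carrier := {x | ∃ g, x = psi r σ t u g ∨ x = psi r σ t u g * .of 1}
      one_mem' := ⟨1, Or.inl (by simp)⟩
      mul_mem' := by
        rintro _ _ ⟨g, rfl | rfl⟩ ⟨g', rfl | rfl⟩
        · exact ⟨g * g', Or.inl (by simp)⟩
        · exact ⟨g * g', Or.inr (by simp [mul_assoc])⟩
        · exact ⟨g * τ g', Or.inr (by rw [mul_assoc, hτ', map_mul, mul_assoc])⟩
        · refine ⟨g * τ g' * .of 1, Or.inl ?_⟩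
          rw [mul_assoc, ← mul_assoc (PresentedGroup.of 1), hτ', map_mul, map_mul, p1]
          simp only [mul_assoc]
      inv_mem' := by
        rintro _ ⟨g, rfl | rfl⟩
        · exact ⟨g⁻¹, Or.inl (by simp)⟩
        · refine ⟨(.of 1)⁻¹ * τ g⁻¹, Or.inr ?_⟩
          rw [map_mul, mul_assoc, ← hτ', map_inv, map_inv, p1]; group }
  have m1 : PresentedGroup.of 1 ∈ S := ⟨1, Or.inr (by simp)⟩
  have mp : ∀ g, psi r σ t u g ∈ S := fun g => ⟨g, Or.inl rfl⟩
  have m0 : PresentedGroup.of 0 ∈ S := by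
    have := mp (.of 0)
    rw [p0] at this
    exact (S.mul_mem_cancel_right m1).1 this
  have m2 : PresentedGroup.of 2 ∈ S := by
    have := mp (.of 2)
    rw [p2] at this
    exact (S.mul_mem_cancel_right (S.mul_mem (S.zpow_mem m0 _) (S.zpow_mem m1 _))).1 this
  have : S = ⊤ := by
    rw [eq_top_iff, ← PresentedGroup.closure_range_of, Subgroup.closure_le]
    rintro _ ⟨i, rfl⟩
    fin_cases i <;> assumption
  exact (this ▸ Subgroup.mem_top x : x ∈ S)

theorem sap_zmod (r σ t u : ℤ) (hu : Odd u) : Sap r (2 * σ) t u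
    (Multiplicative.ofAdd (1 : ZMod 2)) (Multiplicative.ofAdd (1 : ZMod 2))
    (Multiplicative.ofAdd (1 : ZMod 2)) ∧
    T (Multiplicative.ofAdd (1 : ZMod 2)) (Multiplicative.ofAdd (1 : ZMod 2)) t u
      = Multiplicative.ofAdd (1 : ZMod 2) := by
  have h2 : (Multiplicative.ofAdd (1 : ZMod 2)) ^ (2:ℤ) = 1 := by decide
  have ev : ∀ n, T (Multiplicative.ofAdd (1 : ZMod 2)) (Multiplicative.ofAdd (1 : ZMod 2)) n u
      = Multiplicative.ofAdd (1 : ZMod 2) := by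
    obtain ⟨k, rfl⟩ := hu
    intro n
    rw [T, zpow_mul, h2, zpow_add, zpow_mul, h2]; simp
  have h1 : Multiplicative.ofAdd (1 : ZMod 2) * Multiplicative.ofAdd (1 : ZMod 2) *
      (Multiplicative.ofAdd (1 : ZMod 2))⁻¹ * Multiplicative.ofAdd (1 : ZMod 2) = 1 := by decide
  refine ⟨⟨h1, ?_, ?_⟩, ev t⟩
  · rw [T, zpow_mul, h2, zpow_mul, h2, one_zpow, one_zpow]; decide
  · rw [← T_inv h1, ev, SemiconjBy]; decide

end Sapph


theorem stmt7 (r s t u : ℤ) (h : r * u - s * t = 1 ∨ r * u - s * t = -1) (hs : Even s) :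
    (∃! φ : SapphireGroup r s t u →* Multiplicative (ZMod 2),
      φ (PresentedGroup.of 0) = Multiplicative.ofAdd (1 : ZMod 2) ∧
      φ (PresentedGroup.of 1) = Multiplicative.ofAdd (1 : ZMod 2) ∧
      φ (PresentedGroup.of 2) = Multiplicative.ofAdd (1 : ZMod 2)) ∧
    ∀ φ : SapphireGroup r s t u →* Multiplicative (ZMod 2),
      φ (PresentedGroup.of 0) = Multiplicative.ofAdd (1 : ZMod 2) →
      φ (PresentedGroup.of 1) = Multiplicative.ofAdd (1 : ZMod 2) →
      φ (PresentedGroup.of 2) = Multiplicative.ofAdd (1 : ZMod 2) →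
      Nonempty (φ.ker ≃* SapphireGroup r (s / 2) (2 * t) u) := by
  obtain ⟨σ, rfl⟩ : ∃ σ, s = 2 * σ := hs.two_dvd
  obtain ⟨e, he, hee⟩ : ∃ e, e = r * u - 2 * σ * t ∧ e * e = 1 := by
    refine ⟨_, rfl, ?_⟩
    rcases h with h | h <;> rw [h] <;> norm_num
  have hu : Odd u := by
    rw [← Int.not_even_iff_odd]
    rintro ⟨k, rfl⟩
    rcases h with h | h
    · have : 2 * (r * k - σ * t) = 1 := by linear_combination h
      omega
    · have : 2 * (r * k - σ * t) = -1 := by linear_combination h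
      omega
  obtain ⟨Z, hw⟩ := Sapph.sap_zmod r σ t u hu
  refine ⟨⟨Sapph.lift Z, ⟨Sapph.lift_0 _, Sapph.lift_1 _, Sapph.lift_2 _⟩, ?_⟩, ?_⟩
  · rintro f ⟨f0, f1, f2⟩
    apply Sapph.hom_ext
    · rw [f0, Sapph.lift_0]
    · rw [f1, Sapph.lift_1]
    · rw [f2, Sapph.lift_2]
  · intro f f0 f1 f2
    rw [Int.mul_ediv_cancel_left σ two_ne_zero]
    have hz : Multiplicative.ofAdd (1 : ZMod 2) * Multiplicative.ofAdd (1 : ZMod 2) = 1 := by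
      decide
    have hk : ∀ g, f (Sapph.psi r σ t u g) = 1 := by
      have : f.comp (Sapph.psi r σ t u) = 1 := by
        apply Sapph.hom_ext
        · simp [Sapph.psi, Sapph.lift_0, f0, f1, hz]
        · simp [Sapph.psi, Sapph.lift_1, f1, hz]
        · simp [Sapph.psi, Sapph.lift_2, Sapph.map_T, f0, f1, f2, hw, hz]
      exact fun g => DFunLike.congr_fun this g
    have hr : (Sapph.psi r σ t u).range = f.ker := by
      ext x
      rw [MonoidHom.mem_ker]
      constructor
      · rintro ⟨g, rfl⟩
        exact hk g
      · intro hx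
        obtain ⟨g, rfl | rfl⟩ := Sapph.cover r σ t u e he hee x
        · exact ⟨g, rfl⟩
        · rw [map_mul, hk, f1] at hx
          exact absurd hx (by decide)
    exact ⟨((MonoidHom.ofInjective (Sapph.psi_inj r σ t u e he hee)).trans
      (MulEquiv.subgroupCongr hr)).symm⟩
end
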